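/- For every 1-Lipschitz function f : ℤ₊ → ℝ and every n ∈ ℤ₊, the first difference of the Stein solution satisfies |Δg̃_f(n)| ≤ min( 1/(1+b) + (a + 2b)/(a² + 2a + 2 + 2b(a+1)), 1/√(ab) + 1/a ). -/

import Mathlib

/-! Write `δ` for the death rates and let `ℓ_φ = ∑_{k<n} (φ n - φ k) π k`,
`u_φ = ∑_{k≥n} (φ k - φ n) π k`. Summing the Stein equation against `π` gives the bilinear identity
`a δ_n π_n Δg(n) = ℓ_f u_δ - u_f ℓ_δ`. If `c |f n - f k| ≤ δ n - δ k` below `n` and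
`e |f k - f n| ≤ δ k - δ n` above `n`, then `ℓ_f` and `u_f` are at most `ℓ_δ / c` and `u_δ / e` in
absolute value, so `a δ_n π_n |Δg(n)| ≤ ℓ_δ u_δ (1 / c + 1 / e)`. Both `ℓ_δ` and `u_δ` are affine in
the masses of `{k < n}` and `{k ≥ n}`, which bounds their product. For the quadratic rates
`δ n = n + b n (n - 1)` and a 1-Lipschitz `f`, convexity allows for `c` the chord slope `δ n / n`
and for `e` the forward slope `δ (n + 1) - δ n`. -/

section

open Finset

variable {a b c d d' e C μ : ℝ} {δ π φ ψ f g : ℕ → ℝ} {n : ℕ}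

/-- `π` is the stationary law of the immigration–death chain on `ℕ` that jumps up at the constant
rate `a` and down from `n` at rate `δ n`. Stationarity is encoded by detailed balance. -/
structure IsImmigrationDeathLaw (a : ℝ) (δ π : ℕ → ℝ) : Prop where
  birth_pos : 0 < a
  death_zero : δ 0 = 0
  balance : ∀ n, δ (n + 1) * π (n + 1) = a * π n
  pos : ∀ n, 0 < π n
  hasSum_one : HasSum π 1

/-- The Stein operator of the immigration–death chain with birth rate `a` and death rates `δ`. -/
def steinOperator (a : ℝ) (δ g : ℕ → ℝ) (n : ℕ) : ℝ :=
  a * g (n + 1) - δ n * g n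

/-- The sum of `φ n - φ` over `{k | k < n}` under the weights `π`. -/
def lowerDeviation (π φ : ℕ → ℝ) (n : ℕ) : ℝ :=
  ∑ k ∈ range n, (φ n - φ k) * π k

/-- The sum of `φ - φ n` over `{k | n ≤ k}` under the weights `π`. -/
noncomputable def upperDeviation (π φ : ℕ → ℝ) (n : ℕ) : ℝ :=
  ∑' k, (φ (k + n) - φ n) * π (k + n)

/-- The factor in front of `1 / c + 1 / e` in the bound on the first difference of a Stein solution
at `n`, where `d` and `d'` are the death rates at `n` and `n + 1`. It arises by giving `{k | k < n}`
and `{k | n ≤ k}` the least masses `d * π n / a` and `(1 + a / d') * π n` they can have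
relative to `π n`. -/
noncomputable def steinFactor (a d d' : ℝ) : ℝ :=
  d * (d' - d + a) / (d * d' + a * d' + a ^ 2)

theorem upperDeviation_sub_lowerDeviation (hπ : HasSum π 1) (hφ : HasSum (fun k ↦ φ k * π k) μ)
    (n : ℕ) : upperDeviation π φ n - lowerDeviation π φ n = μ - φ n := by
  have hcentred : HasSum (fun k ↦ (φ k - φ n) * π k) (μ - φ n) := by
    simpa only [sub_mul, mul_one] using hφ.sub (hπ.mul_left (φ n))
  have hlower : lowerDeviation π φ n = -∑ k ∈ range n, (φ k - φ n) * π k := by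
    simp only [lowerDeviation, ← sum_neg_distrib, ← neg_mul, neg_sub]
  rw [hlower, sub_neg_eq_add, add_comm, upperDeviation, ← hcentred.tsum_eq]
  exact hcentred.summable.sum_add_tsum_nat_add n

theorem mul_abs_lowerDeviation_le (hπ : ∀ k < n, 0 ≤ π k) (hc : 0 ≤ c)
    (h : ∀ k < n, c * |φ n - φ k| ≤ ψ n - ψ k) :
    c * |lowerDeviation π φ n| ≤ lowerDeviation π ψ n := by
  rw [← abs_of_nonneg hc, ← abs_mul, lowerDeviation, mul_sum]
  refine (abs_sum_le_sum_abs _ _).trans (sum_le_sum fun k hk ↦ ?_)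
  have hk := mem_range.1 hk
  rw [abs_mul, abs_mul, abs_of_nonneg hc, abs_of_nonneg (hπ k hk), ← mul_assoc]
  exact mul_le_mul_of_nonneg_right (h k hk) (hπ k hk)

theorem mul_abs_upperDeviation_le (hπ : ∀ k, n ≤ k → 0 ≤ π k) (hc : 0 ≤ c)
    (hψ : Summable fun k ↦ (ψ (k + n) - ψ n) * π (k + n))
    (h : ∀ k, n ≤ k → c * |φ k - φ n| ≤ ψ k - ψ n) :
    c * |upperDeviation π φ n| ≤ upperDeviation π ψ n := by
  rw [← abs_of_nonneg hc, ← abs_mul, upperDeviation, ← tsum_mul_left, ← Real.norm_eq_abs]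
  refine tsum_of_norm_bounded hψ.hasSum fun k ↦ ?_
  have hk : n ≤ k + n := Nat.le_add_left n k
  rw [Real.norm_eq_abs, abs_mul, abs_mul, abs_of_nonneg hc, abs_of_nonneg (hπ _ hk), ← mul_assoc]
  exact mul_le_mul_of_nonneg_right (h _ hk) (hπ _ hk)

namespace IsImmigrationDeathLaw

theorem death_pos (h : IsImmigrationDeathLaw a δ π) (n : ℕ) : 0 < δ (n + 1) :=
  pos_of_mul_pos_left (h.balance n ▸ mul_pos h.birth_pos (h.pos n)) (h.pos (n + 1)).le

theorem death_nonneg (h : IsImmigrationDeathLaw a δ π) (n : ℕ) : 0 ≤ δ n :=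
  n.casesOn h.death_zero.ge fun n ↦ (h.death_pos n).le

theorem sum_steinOperator_mul (h : IsImmigrationDeathLaw a δ π) (g : ℕ → ℝ) (n : ℕ) :
    ∑ k ∈ range n, steinOperator a δ g k * π k = δ n * π n * g n := by
  induction n with
  | zero => simp [h.death_zero]
  | succ n ih =>
    rw [sum_range_succ, ih, h.balance, steinOperator]
    ring

theorem hasSum_death_mul (h : IsImmigrationDeathLaw a δ π) : HasSum (fun k ↦ δ k * π k) a := by
  have hshift : HasSum (fun k ↦ δ (k + 1) * π (k + 1)) a := by
    simpa only [h.balance, mul_one] using h.hasSum_one.mul_left a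
  simpa [h.death_zero] using (hasSum_nat_add_iff (f := fun k ↦ δ k * π k) 1).1 hshift

theorem sum_add_tsum_eq_one (h : IsImmigrationDeathLaw a δ π) (n : ℕ) :
    ∑ k ∈ range n, π k + ∑' k, π (k + n) = 1 :=
  (h.hasSum_one.summable.sum_add_tsum_nat_add n).trans h.hasSum_one.tsum_eq

theorem lowerDeviation_death (h : IsImmigrationDeathLaw a δ π) (n : ℕ) :
    lowerDeviation π δ n = δ n * π n + (δ n - a) * ∑ k ∈ range n, π k := by
  have hflux := h.sum_steinOperator_mul (fun _ ↦ 1) n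
  simp only [steinOperator, mul_one, sub_mul, sum_sub_distrib, ← mul_sum] at hflux
  simp only [lowerDeviation, sub_mul, sum_sub_distrib, ← mul_sum]
  linear_combination hflux

theorem upperDeviation_death (h : IsImmigrationDeathLaw a δ π) (n : ℕ) :
    upperDeviation π δ n = δ n * π n - (δ n - a) * ∑' k, π (k + n) := by
  linear_combination upperDeviation_sub_lowerDeviation h.hasSum_one h.hasSum_death_mul n +
    h.lowerDeviation_death n + (δ n - a) * h.sum_add_tsum_eq_one n

theorem summable_death_sub_mul (h : IsImmigrationDeathLaw a δ π) (n : ℕ) :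
    Summable fun k ↦ (δ (k + n) - δ n) * π (k + n) := by
  have hcentred : Summable fun k ↦ (δ k - δ n) * π k := by
    simpa only [sub_mul] using
      h.hasSum_death_mul.summable.sub (h.hasSum_one.summable.mul_left (δ n))
  exact (summable_nat_add_iff n).2 hcentred

theorem mul_diff_eq_lowerDeviation_mul_sub (h : IsImmigrationDeathLaw a δ π)
    (hf : HasSum (fun k ↦ f k * π k) μ) (hg : ∀ k, steinOperator a δ g k = f k - μ) (n : ℕ) :
    a * (δ n * π n) * (g (n + 1) - g n) =
      lowerDeviation π f n * upperDeviation π δ n -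
        upperDeviation π f n * lowerDeviation π δ n := by
  have hsum : δ n * π n * g n = (f n - μ) * ∑ k ∈ range n, π k - lowerDeviation π f n := by
    rw [← h.sum_steinOperator_mul g n]
    simp only [hg, lowerDeviation, sub_mul, sum_sub_distrib, ← mul_sum]
    ring
  have hf' := upperDeviation_sub_lowerDeviation h.hasSum_one hf n
  have hδ := upperDeviation_sub_lowerDeviation h.hasSum_one h.hasSum_death_mul n
  have hstep : a * g (n + 1) - δ n * g n = f n - μ := hg n
  linear_combination δ n * π n * hstep + (δ n - a) * hsum + lowerDeviation π δ n * hf' -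
    lowerDeviation π f n * hδ - (f n - μ) * h.lowerDeviation_death n

theorem death_mul_le_sum (h : IsImmigrationDeathLaw a δ π) (n : ℕ) :
    δ n * π n ≤ a * ∑ k ∈ range n, π k := by
  cases n with
  | zero => simp [h.death_zero]
  | succ n =>
    rw [h.balance]
    exact mul_le_mul_of_nonneg_left
      (single_le_sum (fun k _ ↦ (h.pos k).le) (self_mem_range_succ n)) h.birth_pos.le

theorem add_mul_le_tsum (h : IsImmigrationDeathLaw a δ π) (n : ℕ) :
    (δ (n + 1) + a) * π n ≤ δ (n + 1) * ∑' k, π (k + n) := by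
  have htail : π n + π (n + 1) ≤ ∑' k, π (k + n) := by
    simpa [sum_range_succ, add_comm 1 n] using
      ((summable_nat_add_iff n).2 h.hasSum_one.summable).sum_le_tsum (range 2)
        fun k _ ↦ (h.pos (k + n)).le
  calc (δ (n + 1) + a) * π n = δ (n + 1) * (π n + π (n + 1)) := by
        linear_combination -h.balance n
    _ ≤ _ := mul_le_mul_of_nonneg_left htail (h.death_pos n).le

theorem lowerDeviation_death_mul_le (h : IsImmigrationDeathLaw a δ π)
    (hupper : 0 ≤ upperDeviation π δ n) :
    lowerDeviation π δ n * (δ n * π n + a * ∑' k, π (k + n)) ≤ δ n * (δ n * π n) := by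
  have hid : lowerDeviation π δ n * (δ n * π n + a * ∑' k, π (k + n)) =
      δ n * (δ n * π n) -
        (a * ∑ k ∈ range n, π k - δ n * π n) * upperDeviation π δ n := by
    rw [h.lowerDeviation_death, h.upperDeviation_death]
    linear_combination δ n * (δ n * π n) * h.sum_add_tsum_eq_one n
  rw [hid]
  exact sub_le_self _ (mul_nonneg (sub_nonneg.2 (h.death_mul_le_sum n)) hupper)

theorem upperDeviation_death_mul_le (h : IsImmigrationDeathLaw a δ π) (n : ℕ) :
    upperDeviation π δ n * (δ n * δ (n + 1) + a * δ (n + 1) + a ^ 2) ≤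
      a * (δ (n + 1) - δ n + a) * (δ n * π n + a * ∑' k, π (k + n)) := by
  rw [h.upperDeviation_death]
  linear_combination δ n ^ 2 * h.add_mul_le_tsum n

theorem lowerDeviation_mul_upperDeviation_le (h : IsImmigrationDeathLaw a δ π)
    (hupper : 0 ≤ upperDeviation π δ n) :
    lowerDeviation π δ n * upperDeviation π δ n ≤
      a * (δ n * π n) * steinFactor a (δ n) (δ (n + 1)) := by
  have ha := h.birth_pos
  have hn := h.death_nonneg n
  have hn' := h.death_pos n
  have hπ := h.pos n
  have hG : 0 < ∑' k, π (k + n) := ((summable_nat_add_iff n).2 h.hasSum_one.summable).tsum_pos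
    (fun k ↦ (h.pos (k + n)).le) 0 (h.pos (0 + n))
  rw [steinFactor, ← mul_div_assoc, le_div_iff₀ (by positivity)]
  set M := δ n * π n + a * ∑' k, π (k + n)
  set D := δ n * δ (n + 1) + a * δ (n + 1) + a ^ 2
  have hM : 0 < M := by positivity
  refine le_of_mul_le_mul_right ?_ hM
  calc lowerDeviation π δ n * upperDeviation π δ n * D * M
      = lowerDeviation π δ n * M * (upperDeviation π δ n * D) := by ring
    _ ≤ δ n * (δ n * π n) * (upperDeviation π δ n * D) :=
        mul_le_mul_of_nonneg_right (h.lowerDeviation_death_mul_le hupper) (by positivity)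
    _ ≤ δ n * (δ n * π n) * (a * (δ (n + 1) - δ n + a) * M) :=
        mul_le_mul_of_nonneg_left (h.upperDeviation_death_mul_le n) (by positivity)
    _ = _ := by ring

theorem abs_diff_le (h : IsImmigrationDeathLaw a δ π) (hn : 0 < δ n)
    (hf : HasSum (fun k ↦ f k * π k) μ) (hg : ∀ k, steinOperator a δ g k = f k - μ)
    (hc : 0 < c) (hlower : ∀ k < n, c * |f n - f k| ≤ δ n - δ k)
    (he : 0 < e) (hupper : ∀ k, n ≤ k → e * |f k - f n| ≤ δ k - δ n) :
    |g (n + 1) - g n| ≤ steinFactor a (δ n) (δ (n + 1)) * (1 / c + 1 / e) := by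
  have hl := mul_abs_lowerDeviation_le (fun k _ ↦ (h.pos k).le) hc.le hlower
  have hu := mul_abs_upperDeviation_le (fun k _ ↦ (h.pos k).le) he.le
    (h.summable_death_sub_mul n) hupper
  have hl0 : 0 ≤ lowerDeviation π δ n := le_trans (by positivity) hl
  have hu0 : 0 ≤ upperDeviation π δ n := le_trans (by positivity) hu
  rw [← le_div_iff₀' hc] at hl
  rw [← le_div_iff₀' he] at hu
  have hw : 0 < a * (δ n * π n) := mul_pos h.birth_pos (mul_pos hn (h.pos n))
  refine le_of_mul_le_mul_left ?_ hw
  calc a * (δ n * π n) * |g (n + 1) - g n|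
      = |lowerDeviation π f n * upperDeviation π δ n -
          upperDeviation π f n * lowerDeviation π δ n| := by
        rw [← h.mul_diff_eq_lowerDeviation_mul_sub hf hg, abs_mul, abs_of_pos hw]
    _ ≤ |lowerDeviation π f n| * upperDeviation π δ n +
          |upperDeviation π f n| * lowerDeviation π δ n := by
        simpa only [abs_mul, abs_of_nonneg hl0, abs_of_nonneg hu0] using
          abs_sub (lowerDeviation π f n * upperDeviation π δ n)
            (upperDeviation π f n * lowerDeviation π δ n)
    _ ≤ lowerDeviation π δ n / c * upperDeviation π δ n +
          upperDeviation π δ n / e * lowerDeviation π δ n := by gcongr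
    _ = lowerDeviation π δ n * upperDeviation π δ n * (1 / c + 1 / e) := by ring
    _ ≤ a * (δ n * π n) * steinFactor a (δ n) (δ (n + 1)) * (1 / c + 1 / e) :=
        mul_le_mul_of_nonneg_right (h.lowerDeviation_mul_upperDeviation_le hu0) (by positivity)
    _ = _ := by ring

end IsImmigrationDeathLaw

theorem steinFactor_le_div_add (ha : 0 < a) (hd : 0 ≤ d) (hd' : 0 ≤ d') :
    steinFactor a d d' ≤ d / (d + a) := by
  rw [steinFactor, div_le_div_iff₀ (by positivity) (by positivity)]
  linear_combination pow_nonneg hd 3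

theorem steinFactor_add_le_div (ha : 0 < a) (hc : 0 < c) (hce : c ≤ e) (hcd : 2 * c ≤ d) :
    steinFactor a d (d + e) ≤ e / (e + c) := by
  have he : 0 < e := hc.trans_le hce
  have hd : 0 < d := by linarith
  rw [steinFactor, div_le_div_iff₀ (by positivity) (by positivity)]
  have hquad : 0 ≤ d * (d - c) - a * d + a ^ 2 := by
    nlinarith [sq_nonneg (a - d / 2), mul_le_mul_of_nonneg_left hcd hd.le]
  have hcross : a * d * c ≤ a * d * e := by gcongr
  linear_combination hcross + e * hquad + (by positivity : 0 ≤ a * e ^ 2)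

/-- The death rates of the polynomial birth-death distribution `PBD(a; 0, 1, b)`. -/
def pbdDeath (b : ℝ) (n : ℕ) : ℝ :=
  n + b * n * (n - 1)

theorem pbdDeath_succ (b : ℝ) (n : ℕ) : pbdDeath b (n + 1) = (n + 1) * (1 + b * n) := by
  rw [pbdDeath]
  push_cast
  ring

theorem pbdDeath_succ_eq_add (b : ℝ) (n : ℕ) :
    pbdDeath b (n + 1) = pbdDeath b n + (1 + 2 * b * n) := by
  rw [pbdDeath_succ, pbdDeath]
  ring

theorem pbdDeath_sub (b : ℝ) (n k : ℕ) :
    pbdDeath b n - pbdDeath b k = (1 + b * (n + k - 1)) * (n - k) := by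
  rw [pbdDeath, pbdDeath]
  ring

theorem pbdDeath_succ_pos (hb : 0 ≤ b) (n : ℕ) : 0 < pbdDeath b (n + 1) := by
  rw [pbdDeath_succ]
  positivity

theorem isImmigrationDeathLaw_pbd (ha : 0 < a) (hb : 0 ≤ b) (hC : 0 < C)
    (hπ : ∀ n, π n = C * a ^ n / ∏ i ∈ range n, pbdDeath b (i + 1)) (hπ1 : ∑' n, π n = 1) :
    IsImmigrationDeathLaw a (pbdDeath b) π where
  birth_pos := ha
  death_zero := by simp [pbdDeath]
  balance n := by
    have hn := (pbdDeath_succ_pos hb n).ne'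
    have hprod := (prod_pos fun i (_ : i ∈ range n) ↦ pbdDeath_succ_pos hb i).ne'
    rw [hπ, hπ, prod_range_succ]
    field_simp
    ring
  pos n := by
    rw [hπ]
    exact div_pos (by positivity) (prod_pos fun i _ ↦ pbdDeath_succ_pos hb i)
  hasSum_one := by
    have hsum : Summable π := by
      by_contra hsum
      exact zero_ne_one ((tsum_eq_zero_of_not_summable hsum).symm.trans hπ1)
    exact hπ1 ▸ hsum.hasSum

theorem mul_abs_sub_le_pbdDeath_sub_of_lt (hb : 0 ≤ b)
    (hf : ∀ x y : ℕ, |f x - f y| ≤ |(x : ℝ) - y|) {k n : ℕ} (hk : k < n + 1) :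
    (1 + b * n) * |f (n + 1) - f k| ≤ pbdDeath b (n + 1) - pbdDeath b k := by
  have hk' : 0 ≤ ((n + 1 : ℕ) : ℝ) - k := sub_nonneg.2 (Nat.cast_le.2 hk.le)
  have hf' := (hf (n + 1) k).trans_eq (abs_of_nonneg hk')
  have hslope : 1 + b * n ≤ 1 + b * ((n + 1 : ℕ) + k - 1) := by
    gcongr
    push_cast
    linarith [k.cast_nonneg (α := ℝ)]
  rw [pbdDeath_sub]
  exact mul_le_mul hslope hf' (abs_nonneg _) (le_trans (by positivity) hslope)

theorem mul_abs_sub_le_pbdDeath_sub_of_le (hb : 0 ≤ b)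
    (hf : ∀ x y : ℕ, |f x - f y| ≤ |(x : ℝ) - y|) {k n : ℕ} (hk : n ≤ k) :
    (1 + 2 * b * n) * |f k - f n| ≤ pbdDeath b k - pbdDeath b n := by
  rcases hk.eq_or_lt with rfl | hlt
  · simp
  have hk' : 0 ≤ (k : ℝ) - n := sub_nonneg.2 (Nat.cast_le.2 hk)
  have hf' := (hf k n).trans_eq (abs_of_nonneg hk')
  have hslope : 1 + 2 * b * n ≤ 1 + b * (k + n - 1) := by
    have hlt' : (n : ℝ) + 1 ≤ k := mod_cast hlt
    nlinarith
  rw [pbdDeath_sub]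
  exact mul_le_mul hslope hf' (abs_nonneg _) (le_trans (by positivity) hslope)

theorem one_add_mul_le_one_add_two_mul (hb : 0 ≤ b) (n : ℕ) :
    1 + b * n ≤ 1 + 2 * b * (n + 1) := by
  nlinarith [mul_nonneg hb n.cast_nonneg]

theorem steinFactor_pbdDeath_one_mul_le (ha : 0 < a) (hb : 0 ≤ b) :
    steinFactor a (pbdDeath b 1) (pbdDeath b 2) * (1 + 1 / (1 + 2 * b)) ≤
      1 / (1 + b) + (a + 2 * b) / (a ^ 2 + 2 * a + 2 + 2 * b * (a + 1)) := by
  have hone : pbdDeath b 1 = 1 := by simp [pbdDeath]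
  have htwo : pbdDeath b 2 = 2 + 2 * b := by norm_num [pbdDeath]; ring
  set D := a ^ 2 + 2 * a + 2 + 2 * b * (a + 1) with hD
  have hDpos : 0 < D := by positivity
  have hfactor : steinFactor a (pbdDeath b 1) (pbdDeath b 2) = (1 + 2 * b + a) / D := by
    rw [steinFactor, hone, htwo, hD]
    congr 1 <;> ring
  have hsplit : (1 + 2 * b + a) / D * (1 + 1 / (1 + 2 * b)) =
      (a + 2 * (1 + 2 * b)) / (D * (1 + 2 * b)) + (a + 2 * b) / D := by
    field_simp
    ring
  have hremainder : (a + 2 * (1 + 2 * b)) / (D * (1 + 2 * b)) ≤ 1 / (1 + b) := by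
    rw [div_le_div_iff₀ (by positivity) (by positivity)]
    have : 0 ≤ a ^ 2 * (1 + 2 * b) + a * (1 + b) * (1 + 4 * b) := by positivity
    linear_combination this
  rw [hfactor, hsplit]
  gcongr

theorem steinFactor_pbdDeath_mul_le_one_div (ha : 0 < a) (hb : 0 ≤ b) (hn : 1 ≤ n) :
    steinFactor a (pbdDeath b (n + 1)) (pbdDeath b (n + 2)) *
      (1 / (1 + b * n) + 1 / (1 + 2 * b * (n + 1))) ≤ 1 / (1 + b * n) := by
  have hn' : (1 : ℝ) ≤ n := mod_cast hn
  have hd : 2 * (1 + b * n) ≤ pbdDeath b (n + 1) := by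
    rw [pbdDeath_succ]
    gcongr
    linarith
  have hd' : pbdDeath b (n + 2) = pbdDeath b (n + 1) + (1 + 2 * b * (n + 1)) := by
    simpa using pbdDeath_succ_eq_add b (n + 1)
  calc _ ≤ (1 + 2 * b * (n + 1)) / (1 + 2 * b * (n + 1) + (1 + b * n)) *
        (1 / (1 + b * n) + 1 / (1 + 2 * b * (n + 1))) := by
        rw [hd']
        gcongr
        exact steinFactor_add_le_div ha (by positivity) (one_add_mul_le_one_add_two_mul hb n) hd
    _ = 1 / (1 + b * n) := by field_simp

theorem steinFactor_pbdDeath_mul_le_add_div (ha : 0 < a) (hb : 0 ≤ b) (n : ℕ) :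
    steinFactor a (pbdDeath b (n + 1)) (pbdDeath b (n + 2)) *
      (1 / (1 + b * n) + 1 / (1 + 2 * b * (n + 1))) ≤
      1 / (1 + b) + (a + 2 * b) / (a ^ 2 + 2 * a + 2 + 2 * b * (a + 1)) := by
  rcases Nat.eq_zero_or_pos n with rfl | hn
  · simpa using steinFactor_pbdDeath_one_mul_le ha hb
  · have hn' : (1 : ℝ) ≤ n := mod_cast hn
    calc _ ≤ 1 / (1 + b * n) := steinFactor_pbdDeath_mul_le_one_div ha hb hn
      _ ≤ 1 / (1 + b) := by gcongr; exact le_mul_of_one_le_right hb hn'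
      _ ≤ _ := le_add_of_nonneg_right (by positivity)

theorem sq_add_mul_div_le (hb : 0 < b) (n : ℕ) :
    (n + (n + 1) * ((1 + b * n) / (1 + 2 * b * (n + 1)))) ^ 2 ≤
      4 * ((n + 1) * (1 + b * n)) / b := by
  set r := (1 + b * n) / (1 + 2 * b * (n + 1)) with hr
  have hr0 : 0 ≤ r := by positivity
  have hr1 : r ≤ 1 := div_le_one_of_le₀ (one_add_mul_le_one_add_two_mul hb.le n) (by positivity)
  have hnr : b * ((n + 1) * r) ≤ 4 + b * n := by
    rw [hr, ← mul_div_assoc, ← mul_div_assoc, div_le_iff₀ (by positivity)]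
    have : 0 ≤ 4 + b * (8 * n + 7) + b ^ 2 * n * (n + 1) := by positivity
    linear_combination this
  have hcross : 0 ≤ b * n * (n + 1) * (1 - r) := mul_nonneg (by positivity) (by linarith)
  have hsq : 0 ≤ b * (n + 1) ^ 2 * (r * (1 - r)) :=
    mul_nonneg (by positivity) (mul_nonneg hr0 (by linarith))
  have hn : 0 ≤ b * n := by positivity
  rw [le_div_iff₀ hb]
  linear_combination 2 * hcross + hsq + (n + 1 : ℝ) * hnr + hn

theorem succ_mul_le_pbdDeath_add (ha : 0 < a) (hb : 0 < b) (n : ℕ) :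
    (n + 1) * (1 + (1 + b * n) / (1 + 2 * b * (n + 1))) ≤
      (1 / √(a * b) + 1 / a) * (pbdDeath b (n + 1) + a) := by
  set r := (1 + b * n) / (1 + 2 * b * (n + 1))
  set d := pbdDeath b (n + 1) with hd
  have hdpos : 0 < d := pbdDeath_succ_pos hb.le n
  have hsqrt : n + (n + 1) * r ≤ (d + a) / √(a * b) := by
    refine le_of_sq_le_sq ?_ (by positivity)
    calc (n + (n + 1) * r) ^ 2 ≤ 4 * d / b := by
          rw [hd, pbdDeath_succ]
          exact sq_add_mul_div_le hb n
      _ = 4 * d * a / (a * b) := by field_simp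
      _ ≤ (d + a) ^ 2 / (a * b) := by gcongr; exact four_mul_le_sq_add d a
      _ = ((d + a) / √(a * b)) ^ 2 := by rw [div_pow, Real.sq_sqrt (by positivity)]
  have hone : 1 ≤ (d + a) / a := (one_le_div ha).2 (by linarith)
  linear_combination hsqrt + hone

theorem steinFactor_pbdDeath_mul_le_one_div_sqrt_add (ha : 0 < a) (hb : 0 < b) (n : ℕ) :
    steinFactor a (pbdDeath b (n + 1)) (pbdDeath b (n + 2)) *
      (1 / (1 + b * n) + 1 / (1 + 2 * b * (n + 1))) ≤ 1 / √(a * b) + 1 / a := by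
  have hd := pbdDeath_succ_pos hb.le n
  calc _ ≤ pbdDeath b (n + 1) / (pbdDeath b (n + 1) + a) *
        (1 / (1 + b * n) + 1 / (1 + 2 * b * (n + 1))) := by
        gcongr
        exact steinFactor_le_div_add ha hd.le (pbdDeath_succ_pos hb.le (n + 1)).le
    _ = (n + 1) * (1 + (1 + b * n) / (1 + 2 * b * (n + 1))) / (pbdDeath b (n + 1) + a) := by
        rw [div_mul_eq_mul_div]
        congr 1
        rw [pbdDeath_succ]
        field_simp
    _ ≤ _ := (div_le_iff₀ (by positivity)).2 (succ_mul_le_pbdDeath_add ha hb n)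

end

/-- bound on the first difference `|Δg̃_f n|` for the PBD(a;0,1,b) Stein solution. -/
theorem stmt_5
    (a b : ℝ) (ha : 0 < a) (hb : 0 < b)
    (C : ℝ) (hC : 0 < C) (π : ℕ → ℝ)
    (hπ : ∀ n : ℕ, π n =
      C * a ^ n / ∏ i ∈ Finset.range n, (((i : ℝ) + 1) + b * ((i : ℝ) + 1) * (i : ℝ)))
    (hπ1 : ∑' n, π n = 1)
    (f : ℕ → ℝ) (hf : ∀ x y : ℕ, |f x - f y| ≤ |(x : ℝ) - (y : ℝ)|)
    (hfs : Summable fun n => |f n| * π n)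
    (g : ℕ → ℝ) (hg0 : g 0 = g 1)
    (hg : ∀ n : ℕ, a * g (n + 1) - ((n : ℝ) + b * (n : ℝ) * ((n : ℝ) - 1)) * g n
      = f n - ∑' k, f k * π k)
    :
    ∀ n : ℕ, |g (n + 1) - g n| ≤
      min (1 / (1 + b) + (a + 2 * b) / (a ^ 2 + 2 * a + 2 + 2 * b * (a + 1)))
        (1 / Real.sqrt (a * b) + 1 / a) := by
  have hlaw : IsImmigrationDeathLaw a (pbdDeath b) π := by
    refine isImmigrationDeathLaw_pbd ha hb.le hC (fun n ↦ (hπ n).trans ?_) hπ1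
    congr! 2 with i
    rw [pbdDeath_succ]
    ring
  have hmean : HasSum (fun k ↦ f k * π k) (∑' k, f k * π k) := by
    refine (Summable.of_abs (hfs.congr fun k ↦ ?_)).hasSum
    rw [abs_mul, abs_of_pos (hlaw.pos k)]
  rintro (_ | n)
  · rw [zero_add, ← hg0, sub_self, abs_zero]
    positivity
  · have hdiff := hlaw.abs_diff_le (hlaw.death_pos n) hmean hg
      (by positivity) (fun k ↦ mul_abs_sub_le_pbdDeath_sub_of_lt hb.le hf)
      (by positivity) (fun k ↦ mul_abs_sub_le_pbdDeath_sub_of_le hb.le hf)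
    push_cast at hdiff
    exact le_min (hdiff.trans (steinFactor_pbdDeath_mul_le_add_div ha hb.le n))
      (hdiff.trans (steinFactor_pbdDeath_mul_le_one_div_sqrt_add ha hb n))
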